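/- arXiv:math/0701554 — 6 statements merged into one kernel-verified Lean document; each statement's English description precedes it below -/
import Mathlib

section
/- Let a, b > 0 be real numbers and let c > 0 satisfy c² = a² + b². Define h = ab/(a+b) (the side of the harmonic square) and s = abc/(ab + c²) (the side of the symphonic square). Then 1/c² + 1/h² = 1/s²; that is, the triple [1/c, 1/h, 1/s] is Pythagorean. -/
/-- **Symphonic Theorem.** For a right triangle with legs `a, b` and hypotenuse `c`,
with harmonic square side `h = ab/(a+b)` and symphonic square side `s = abc/(ab+c²)`,
we have `1/c² + 1/h² = 1/s²`, i.e. `[1/c, 1/h, 1/s]` is Pythagorean. -/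
theorem symphonic_theorem (a b c h s : ℝ) (ha : 0 < a) (hb : 0 < b) (hc : 0 < c)
    (hpyth : c ^ 2 = a ^ 2 + b ^ 2)
    (hh : h = a * b / (a + b)) (hs : s = a * b * c / (a * b + c ^ 2)) :
    1 / c ^ 2 + 1 / h ^ 2 = 1 / s ^ 2 := by
  -- With `P = a * b`, the Pythagorean relation reads `(a + b) ^ 2 = c ^ 2 + 2 * P`, so the
  -- numerators over the common denominator `P ^ 2 * c ^ 2` form a perfect square.
  have key : (a * b) ^ 2 + c ^ 2 * (a + b) ^ 2 = (a * b + c ^ 2) ^ 2 := by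
    linear_combination (-c ^ 2) * hpyth
  calc 1 / c ^ 2 + 1 / h ^ 2
      = ((a * b) ^ 2 + c ^ 2 * (a + b) ^ 2) / (a * b * c) ^ 2 := by
        rw [hh]
        field_simp
    _ = 1 / s ^ 2 := by
        rw [key, hs, div_pow, one_div_div]
end

section
/- Let a, b > 0 be real numbers and let c > 0 satisfy c² = a² + b². Define h = ab/(a+b) and s = abc/(ab + c²). Then c > h > s. -/
/-- For a right triangle with legs `a, b` and hypotenuse `c`, the hypotenuse, the
harmonic square side `h = ab/(a+b)` and the symphonic square side `s = abc/(ab+c²)`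
satisfy `c > h > s`. -/
theorem hypotenuse_gt_harmonic_gt_symphonic (a b c h s : ℝ)
    (ha : 0 < a) (hb : 0 < b) (hc : 0 < c)
    (hpyth : c ^ 2 = a ^ 2 + b ^ 2)
    (hh : h = a * b / (a + b)) (hs : s = a * b * c / (a * b + c ^ 2)) :
    c > h ∧ h > s := by
  subst hh hs
  have hab : 0 < a * b := mul_pos ha hb
  have hac : a < c := by nlinarith [sq_pos_of_pos hb]
  have hcab : c < a + b := by nlinarith
  constructor
  · -- `b / (a + b) < 1`, so the harmonic side is already smaller than `a`.
    rw [gt_iff_lt, div_lt_iff₀ (by positivity)]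
    nlinarith
  · -- The claim reduces to `c * (a + b) < a * b + c ^ 2`; by Pythagoras, twice the
    -- difference of the two sides is `(a + b - c) ^ 2`, positive as `c < a + b`.
    have hkey : c * (a + b) < a * b + c ^ 2 := by
      nlinarith [pow_pos (sub_pos.mpr hcab) 2]
    rw [gt_iff_lt, div_lt_div_iff₀ (by positivity) (by positivity), mul_assoc (a * b)]
    exact mul_lt_mul_of_pos_left hkey hab
end

section
/- If [a, b, c] is a primitive Pythagorean triple (positive integers with a² + b² = c² and gcd(a,b) = 1), then the symphonic major derivative [c(a+b), ab, ab + c²] is also a primitive Pythagorean triple: (c(a+b))² + (ab)² = (ab + c²)² and gcd(c(a+b), ab) = 1. -/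
/-- The symphonic major derivative `[c(a+b), ab, ab + c²]` of a primitive
Pythagorean triple `[a, b, c]` is again a primitive Pythagorean triple. -/
theorem symphonic_major_derivative_ppt (a b c : ℕ)
    (ha : 0 < a) (hb : 0 < b) (hc : 0 < c)
    (hpyth : a ^ 2 + b ^ 2 = c ^ 2) (hcop : Nat.gcd a b = 1) :
    (c * (a + b)) ^ 2 + (a * b) ^ 2 = (a * b + c ^ 2) ^ 2 ∧
      Nat.gcd (c * (a + b)) (a * b) = 1 := by
  have hab : Nat.Coprime a b := hcop
  constructor
  · linear_combination c ^ 2 * hpyth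
  · -- Modulo `a`, `c ^ 2` is `b ^ 2` and `a + b` is `b`; symmetrically modulo `b`.
    have hca : Nat.Coprime c a := by
      rw [← Nat.coprime_pow_left_iff two_pos, ← hpyth, sq a]
      simpa using hab.symm.pow_left 2
    have hcb : Nat.Coprime c b := by
      rw [← Nat.coprime_pow_left_iff two_pos, ← hpyth, sq b]
      simpa using hab.pow_left 2
    have hsa : Nat.Coprime (a + b) a := by simpa using hab.symm
    have hsb : Nat.Coprime (a + b) b := by simpa using hab
    exact (hca.mul_left hsa).mul_right (hcb.mul_left hsb)
end

section
/- If [a, b, c] is a primitive Pythagorean triple (positive integers with a² + b² = c² and gcd(a,b) = 1), then a ≠ b, c² − ab > 0, and the symphonic minor derivative [c·|a−b|, ab, c² − ab] is also a primitive Pythagorean triple: (c·|a−b|)² + (ab)² = (c² − ab)² and gcd(c·|a−b|, ab) = 1. -/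
/-!
Since `(a - b)² = c² - 2ab`, expanding `c²(a - b)² + (ab)²` gives `(c² - ab)²`.
For primitivity, both `c` and `a - b` are coprime to `a` and to `b`, because `c² = a² + b²` and
`gcd(a, b) = 1`. Finally `a = b` would force `a = b = 1` and `c² = 2`, which is impossible.
-/

/-- The symphonic minor derivative `[c·|a−b|, ab, c² − ab]` of a primitive
Pythagorean triple `[a, b, c]` is again a primitive Pythagorean triple
(and is well-defined: `a ≠ b` and `c² − ab > 0`). -/
theorem symphonic_minor_derivative_ppt (a b c : ℤ)
    (ha : 0 < a) (hb : 0 < b) (hc : 0 < c)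
    (hpyth : a ^ 2 + b ^ 2 = c ^ 2) (hcop : Int.gcd a b = 1) :
    a ≠ b ∧ 0 < c ^ 2 - a * b ∧
      (c * |a - b|) ^ 2 + (a * b) ^ 2 = (c ^ 2 - a * b) ^ 2 ∧
      Int.gcd (c * |a - b|) (a * b) = 1 := by
  have hab : IsCoprime a b := Int.isCoprime_iff_gcd_eq_one.mpr hcop
  refine ⟨?_, ?_, ?_, ?_⟩
  · rintro rfl
    have ha1 : a = 1 := by
      rw [Int.gcd_self] at hcop
      omega
    subst ha1
    have hc2 : c < 2 := by nlinarith
    have hc1 : c = 1 := by omega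
    subst hc1
    norm_num at hpyth
  · nlinarith [sq_nonneg (a - b), mul_pos ha hb]
  · rw [mul_pow, sq_abs, ← hpyth]
    ring
  · have hca : IsCoprime c a := by
      have h : IsCoprime (c ^ 2) a := by
        rw [← hpyth, show a ^ 2 + b ^ 2 = b ^ 2 + a * a by ring]
        exact hab.symm.pow_left.add_mul_left_left a
      exact (IsCoprime.pow_left_iff two_pos).mp h
    have hcb : IsCoprime c b := by
      have h : IsCoprime (c ^ 2) b := by
        rw [← hpyth, show a ^ 2 + b ^ 2 = a ^ 2 + b * b by ring]
        exact hab.pow_left.add_mul_left_left b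
      exact (IsCoprime.pow_left_iff two_pos).mp h
    obtain ⟨u, v, huv⟩ := hab
    have hda : IsCoprime (a - b) a := ⟨-v, u + v, by linear_combination huv⟩
    have hdb : IsCoprime (a - b) b := ⟨u, u + v, by linear_combination huv⟩
    have h : IsCoprime (c * (a - b)) (a * b) :=
      (hca.mul_right hcb).mul_left (hda.mul_right hdb)
    have hgcd := Int.isCoprime_iff_gcd_eq_one.mp h
    rwa [Int.gcd_def, Int.natAbs_mul, Int.natAbs_abs, ← Int.natAbs_mul, ← Int.gcd_def]
end

section
/- (Anti-derivative Theorem) Let a, b, c and a', b', c' be positive integers with a < b, a' < b', a² + b² = c², a'² + b'² = c'². If the symphonic major derivatives coincide, i.e. c(a+b) = c'(a'+b'), ab = a'b', and ab + c² = a'b' + c'², then a = a', b = b', c = c'. Likewise, if the symphonic minor derivatives coincide, i.e. c(b−a) = c'(b'−a'), ab = a'b', and c² − ab = c'² − a'b', then a = a', b = b', c = c'. -/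
/-!
In both cases the second and third components of the derivative recover `a * b` and `c ^ 2`
(the third is `c ^ 2 ± a * b`). These two numbers already determine the triple, by
`legs_eq_of_mul_eq_of_sq_eq`.
-/

/-- Legs `a < b` of a right triangle are determined by the product `a * b` and the hypotenuse:
`(a + b) ^ 2 = c ^ 2 + 2 * a * b` gives the sum, and the sum and product give the unordered pair. -/
lemma legs_eq_of_mul_eq_of_sq_eq {a b c a' b' c' : ℕ} (hab : a < b) (hab' : a' < b')
    (hpyth : a ^ 2 + b ^ 2 = c ^ 2) (hpyth' : a' ^ 2 + b' ^ 2 = c' ^ 2)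
    (hmul : a * b = a' * b') (hsq : c ^ 2 = c' ^ 2) : a = a' ∧ b = b' ∧ c = c' := by
  have hc : c = c' := Nat.pow_left_injective two_ne_zero hsq
  have hsum : a + b = a' + b' := by
    apply Nat.pow_left_injective two_ne_zero
    show (a + b) ^ 2 = (a' + b') ^ 2
    linarith [add_sq a b, add_sq a' b']
  have ha : a = a' := by
    zify at *
    have h : (a - a' : ℤ) * (a - b') = 0 := by linear_combination (a : ℤ) * hsum - hmul
    rcases mul_eq_zero.mp h with h | h <;> linarith
  exact ⟨ha, by omega, hc⟩

/-- **Anti-derivative Theorem.** A Pythagorean triple is determined by its symphonic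
major derivative, and likewise by its symphonic minor derivative. -/
theorem anti_derivative_theorem (a b c a' b' c' : ℕ)
    (ha : 0 < a) (hb : 0 < b) (hc : 0 < c)
    (ha' : 0 < a') (hb' : 0 < b') (hc' : 0 < c')
    (hab : a < b) (hab' : a' < b')
    (hpyth : a ^ 2 + b ^ 2 = c ^ 2) (hpyth' : a' ^ 2 + b' ^ 2 = c' ^ 2) :
    ((c * (a + b) = c' * (a' + b') ∧ a * b = a' * b' ∧ a * b + c ^ 2 = a' * b' + c' ^ 2) →
        (a = a' ∧ b = b' ∧ c = c')) ∧
    ((c * (b - a) = c' * (b' - a') ∧ a * b = a' * b' ∧ c ^ 2 - a * b = c' ^ 2 - a' * b') →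
        (a = a' ∧ b = b' ∧ c = c')) := by
  refine ⟨fun ⟨_, hmul, h⟩ => ?_, fun ⟨_, hmul, h⟩ => ?_⟩
  · exact legs_eq_of_mul_eq_of_sq_eq hab hab' hpyth hpyth' hmul (by omega)
  · -- `a * b ≤ c ^ 2`, so the truncated subtractions in `h` are genuine.
    have h1 : a * b ≤ c ^ 2 := by nlinarith
    have h2 : a' * b' ≤ c' ^ 2 := by nlinarith
    exact legs_eq_of_mul_eq_of_sq_eq hab hab' hpyth hpyth' hmul (by omega)
end

section
/- Define the sequence x by x₁ = 1, x₂ = 6, and x_{n+2} = 6·x_{n+1} − x_n for n ≥ 1. Then for every n ≥ 1: (i) 2·(x_{n+1} − x_n)² = (x_n + x_{n+1})² + 1, so that writing x_n + x_{n+1} = m + (m+1) gives the Pythagorean triple m² + (m+1)² = (x_{n+1} − x_n)²; and (ii) there exists a positive integer y with 2·x_n² = y·(y+1), i.e. each x_n solves the square-triangle problem. -/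
/-!
The quadratic form `a² - 6ab + b²` is preserved by `(a, b) ↦ (b, 6b - a)` and equals `1` at
`(1, 6)`, so consecutive terms `a, b` always satisfy `a² - 6ab + b² = 1`. This is identity (i)
rearranged, and also says `(b - 3a)² = 8a² + 1`. As `a + b` stays odd, `a + b = 2m + 1` gives the
Pythagorean triple, while `b - 3a = 2y + 1` gives `2a² = y(y + 1)`.
-/

/-- Invariants of consecutive terms. The bound `3 * x n + 3 ≤ x (n + 1)` selects the positive
root `b - 3a` of `8a² + 1` and keeps the witness `y` positive; the last clause is the oddness
of `x n + x (n + 1)`. -/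
theorem square_triangle_invariant (x : ℕ → ℤ)
    (hx1 : x 1 = 1) (hx2 : x 2 = 6)
    (hrec : ∀ n, 1 ≤ n → x (n + 2) = 6 * x (n + 1) - x n) (n : ℕ) (hn : 1 ≤ n) :
    x n ^ 2 - 6 * x n * x (n + 1) + x (n + 1) ^ 2 = 1 ∧ 0 < x n ∧
      3 * x n + 3 ≤ x (n + 1) ∧ ∃ m, x n + x (n + 1) = 2 * m + 1 := by
  induction n, hn using Nat.le_induction with
  | base => exact ⟨by norm_num [hx1, hx2], by omega, by norm_num [hx1, hx2],
      3, by norm_num [hx1, hx2]⟩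
  | succ k hk ih =>
    obtain ⟨hq, hpos, hle, m, hm⟩ := ih
    have hr : x (k + 1 + 1) = 6 * x (k + 1) - x k := hrec k hk
    rw [hr]
    refine ⟨by linear_combination hq, by omega, by omega, 4 * x (k + 1) - m - 1, ?_⟩
    linear_combination -hm

/-- The square-triangle sequence `1, 6, 35, 204, 1189, …` (with recursion
`x_{n+2} = 6x_{n+1} − x_n`): for each `n ≥ 1`, (i) `2(x_{n+1} − x_n)² = (x_n + x_{n+1})² + 1`,
so splitting `x_n + x_{n+1} = m + (m+1)` yields the Pythagorean triple
`m² + (m+1)² = (x_{n+1} − x_n)²`; and (ii) each `x_n` solves the square-triangle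
problem `2x² = y(y+1)`. -/
theorem square_triangle_sequence (x : ℕ → ℤ)
    (hx1 : x 1 = 1) (hx2 : x 2 = 6)
    (hrec : ∀ n, 1 ≤ n → x (n + 2) = 6 * x (n + 1) - x n) :
    ∀ n, 1 ≤ n →
      (2 * (x (n + 1) - x n) ^ 2 = (x n + x (n + 1)) ^ 2 + 1 ∧
        ∃ m : ℤ, 0 < m ∧ x n + x (n + 1) = m + (m + 1) ∧
          m ^ 2 + (m + 1) ^ 2 = (x (n + 1) - x n) ^ 2) ∧
      ∃ y : ℤ, 0 < y ∧ 2 * (x n) ^ 2 = y * (y + 1) := by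
  intro n hn
  obtain ⟨hq, hpos, hle, m, hm⟩ := square_triangle_invariant x hx1 hx2 hrec n hn
  refine ⟨⟨by linear_combination hq, m, by omega, by omega, ?_⟩, m - 2 * x n, by omega, ?_⟩
  · have hb : x (n + 1) = 2 * m + 1 - x n := by omega
    rw [hb] at hq ⊢
    linarith
  · have hb : x (n + 1) = 2 * m + 1 - x n := by omega
    rw [hb] at hq
    linarith
end
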